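/- Let R, P_c, T_c, P₀, T₀ > 0, m ≥ 0, b > 0, ϑ₀ ∈ ℝ, α₀,…,α₃ ∈ ℝ, and fix n > 0 with bn < 1. Assume that ψ_p(T) > R for every T > 0, where ψ_p(T) = ∑_{i=0}^{3} α_i T^i (i.e., the ideal-gas heat capacity at constant volume ψ_v = ψ_p − R is positive). Then the bulk Helmholtz free energy density T ↦ f_b(n,T) (as in the context) is a concave function on the interval (0, ∞). -/

import Mathlib

/-!
Up to a function affine in `T`, the free energy is a thermal part plus an attraction part. With
`c = ψ_p - R`, the ideal gas terms `-n R (T - T₀)` and `n R T log T` turn `ψ_p` into `c` in the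
energy and the entropy integral respectively, so the thermal part is `n (U - T S)` with `U = ∫ c`
and `S = ∫ c / ξ`. Since `dU = T dS`, its first two derivatives are `-n S` and `-n c / T ≤ 0`.
Attraction is `a(T)` times a nonpositive factor, and `a` is convex: when `(p - q √T)²` is expanded,
the only term that is not affine in `T` is `-2 p q √T`.
-/

open Set

theorem hasDerivAt_integral_of_continuousOn {E : Type*} [NormedAddCommGroup E] [NormedSpace ℝ E]
    [CompleteSpace E] {f : ℝ → E} {s : Set ℝ} [OrdConnected s] {x₀ x : ℝ} (hs : IsOpen s)
    (hf : ContinuousOn f s) (hx₀ : x₀ ∈ s) (hx : x ∈ s) :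
    HasDerivAt (fun y => ∫ t in x₀..y, f t) (f x) x :=
  intervalIntegral.integral_hasDerivAt_right
    (hf.mono (OrdConnected.uIcc_subset ‹_› hx₀ hx)).intervalIntegrable
    (hf.stronglyMeasurableAtFilter hs x hx) (hf.continuousAt (hs.mem_nhds hx))

theorem continuousOn_div_id {f : ℝ → ℝ} {s : Set ℝ} (hf : ContinuousOn f s) (hs : 0 ∉ s) :
    ContinuousOn (fun x => f x / x) s :=
  hf.div continuousOn_id fun _ hx => ne_of_mem_of_not_mem hx hs

/-- The Helmholtz energy `U - T S`, relative to the reference temperature `T₀`, of a substance whose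
heat capacity at constant volume is `c`: the first integral is the internal energy `U`, the second
one the entropy `S`. -/
noncomputable def thermalFreeEnergy (c : ℝ → ℝ) (T₀ T : ℝ) : ℝ :=
  (∫ ξ in T₀..T, c ξ) - T * ∫ ξ in T₀..T, c ξ / ξ

theorem hasDerivAt_thermalFreeEnergy {c : ℝ → ℝ} {T₀ T : ℝ} (hc : ContinuousOn c (Ioi 0))
    (hT₀ : 0 < T₀) (hT : 0 < T) :
    HasDerivAt (thermalFreeEnergy c T₀) (-∫ ξ in T₀..T, c ξ / ξ) T := by
  have hU := hasDerivAt_integral_of_continuousOn isOpen_Ioi hc hT₀ hT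
  have hS := hasDerivAt_integral_of_continuousOn isOpen_Ioi
    (continuousOn_div_id hc self_notMem_Ioi) hT₀ hT
  refine (hU.sub ((hasDerivAt_id' T).mul hS)).congr_deriv ?_
  rw [mul_div_cancel₀ _ hT.ne']
  ring

theorem concaveOn_thermalFreeEnergy {c : ℝ → ℝ} {T₀ : ℝ} (hc : ContinuousOn c (Ioi 0))
    (hc₀ : ∀ T, 0 < T → 0 ≤ c T) (hT₀ : 0 < T₀) :
    ConcaveOn ℝ (Ioi 0) (thermalFreeEnergy c T₀) := by
  have hF (T : ℝ) (hT : 0 < T) := hasDerivAt_thermalFreeEnergy hc hT₀ hT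
  refine concaveOn_of_hasDerivWithinAt2_nonpos (f' := fun T => -∫ ξ in T₀..T, c ξ / ξ)
    (f'' := fun T => -(c T / T)) (convex_Ioi 0)
    (fun T hT => (hF T hT).continuousAt.continuousWithinAt) ?_ ?_ ?_ <;>
    rw [interior_Ioi] <;> intro T hT
  · exact (hF T hT).hasDerivWithinAt
  · exact (hasDerivAt_integral_of_continuousOn isOpen_Ioi
      (continuousOn_div_id hc self_notMem_Ioi) hT₀ hT).neg.hasDerivWithinAt
  · exact neg_nonpos.2 (div_nonneg (hc₀ T hT) (le_of_lt hT))

/-- The ideal gas part `f_b^ideal` of the bulk Helmholtz free energy density, for an arbitrary heat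
capacity at constant pressure `ψ`. -/
noncomputable def idealFreeEnergy (R P₀ T₀ ϑ₀ : ℝ) (ψ : ℝ → ℝ) (n T : ℝ) : ℝ :=
  n * ϑ₀ + n * (∫ ξ in T₀..T, ψ ξ) - n * R * (T - T₀) - n * R * T * Real.log (P₀ / (n * R * T))
    - n * T * ∫ ξ in T₀..T, ψ ξ / ξ

theorem idealFreeEnergy_eq_thermalFreeEnergy_add {R P₀ T₀ n T : ℝ} (ϑ₀ : ℝ) {ψ : ℝ → ℝ}
    (hR : 0 < R) (hP₀ : 0 < P₀) (hT₀ : 0 < T₀) (hn : 0 < n) (hT : 0 < T)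
    (hψ : ContinuousOn ψ (Ioi 0)) :
    idealFreeEnergy R P₀ T₀ ϑ₀ ψ n T =
      n * thermalFreeEnergy (fun ξ => ψ ξ - R) T₀ T +
        (-(n * R * Real.log (P₀ / (n * R * T₀))) * T + n * ϑ₀) := by
  have hsub : uIcc T₀ T ⊆ Ioi 0 := ordConnected_Ioi.uIcc_subset hT₀ hT
  have hzero : 0 ∉ uIcc T₀ T := fun h => self_notMem_Ioi (hsub h)
  have hU : ∫ ξ in T₀..T, (ψ ξ - R) = (∫ ξ in T₀..T, ψ ξ) - R * (T - T₀) := by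
    rw [intervalIntegral.integral_sub (hψ.mono hsub).intervalIntegrable
      intervalIntegrable_const, intervalIntegral.integral_const, smul_eq_mul, mul_comm R]
  have hS : ∫ ξ in T₀..T, (ψ ξ - R) / ξ = (∫ ξ in T₀..T, ψ ξ / ξ) - R * Real.log (T / T₀) := by
    simp only [sub_div]
    rw [intervalIntegral.integral_sub
      (continuousOn_div_id (hψ.mono hsub) hzero).intervalIntegrable
      (continuousOn_div_id continuousOn_const hzero).intervalIntegrable]
    simp only [div_eq_mul_inv R, intervalIntegral.integral_const_mul, integral_inv_of_pos hT₀ hT]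
  have hlog : Real.log (P₀ / (n * R * T)) =
      Real.log (P₀ / (n * R * T₀)) - Real.log (T / T₀) := by
    rw [← Real.log_div (by positivity) (by positivity)]
    congr 1
    field_simp
  rw [idealFreeEnergy, thermalFreeEnergy, hU, hS, hlog]
  ring

theorem concaveOn_idealFreeEnergy {R P₀ T₀ n : ℝ} (ϑ₀ : ℝ) {ψ : ℝ → ℝ}
    (hR : 0 < R) (hP₀ : 0 < P₀) (hT₀ : 0 < T₀) (hn : 0 < n) (hψ : ContinuousOn ψ (Ioi 0))
    (hψR : ∀ T, 0 < T → R ≤ ψ T) :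
    ConcaveOn ℝ (Ioi 0) (idealFreeEnergy R P₀ T₀ ϑ₀ ψ n) := by
  have hthermal : ConcaveOn ℝ (Ioi 0) (thermalFreeEnergy (fun ξ => ψ ξ - R) T₀) :=
    concaveOn_thermalFreeEnergy (hψ.sub continuousOn_const)
      (fun T hT => sub_nonneg.2 (hψR T hT)) hT₀
  have haffine : ConcaveOn ℝ (Ioi 0)
      fun T => -(n * R * Real.log (P₀ / (n * R * T₀))) * T + n * ϑ₀ :=
    ((LinearMap.mulLeft ℝ _).concaveOn (convex_Ioi 0)).add_const _
  exact ((hthermal.smul hn.le).add haffine).congr fun T hT =>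
    (idealFreeEnergy_eq_thermalFreeEnergy_add ϑ₀ hR hP₀ hT₀ hn hT hψ).symm

/-- The repulsion part `f_b^repulsion` of the bulk Helmholtz free energy density. -/
noncomputable def repulsionFreeEnergy (R b n T : ℝ) : ℝ :=
  -(n * R * T * Real.log (1 - b * n))

theorem concaveOn_repulsionFreeEnergy (R b n : ℝ) {s : Set ℝ} (hs : Convex ℝ s) :
    ConcaveOn ℝ s (repulsionFreeEnergy R b n) :=
  ((LinearMap.mulLeft ℝ (-(n * R * Real.log (1 - b * n)))).concaveOn hs).congr fun T _ => by
    simp only [LinearMap.mulLeft_apply, repulsionFreeEnergy]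
    ring

/-- The attraction part `f_b^attraction` of the bulk Helmholtz free energy density, for an arbitrary
energy parameter `a`. -/
noncomputable def attractionFreeEnergy (b : ℝ) (a : ℝ → ℝ) (n T : ℝ) : ℝ :=
  a T * n / (2 * √2 * b) *
    Real.log ((1 + (1 - √2) * b * n) / (1 + (1 + √2) * b * n))

theorem log_one_add_mul_div_one_add_mul_nonpos {x : ℝ} (hx₀ : 0 ≤ x) (hx₁ : x ≤ 1) :
    Real.log ((1 + (1 - √2) * x) / (1 + (1 + √2) * x)) ≤ 0 := by
  have hsqrt : √2 ≤ 2 := Real.sqrt_le_iff.2 (by norm_num)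
  have hnum : 0 ≤ 1 + (1 - √2) * x := by nlinarith
  have hden : 0 < 1 + (1 + √2) * x := by positivity
  refine Real.log_nonpos (div_nonneg hnum hden.le) ((div_le_one hden).2 ?_)
  gcongr
  linarith [Real.sqrt_nonneg 2]

theorem concaveOn_attractionFreeEnergy {b n : ℝ} {a : ℝ → ℝ} {s : Set ℝ} (hb : 0 ≤ b)
    (hn : 0 ≤ n) (hbn : b * n ≤ 1) (ha : ConvexOn ℝ s a) :
    ConcaveOn ℝ s (attractionFreeEnergy b a n) := by
  have hlog : Real.log ((1 + (1 - √2) * b * n) / (1 + (1 + √2) * b * n)) ≤ 0 := by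
    simpa only [mul_assoc] using
      log_one_add_mul_div_one_add_mul_nonpos (mul_nonneg hb hn) hbn
  have hcoeff : 0 ≤ -(n / (2 * √2 * b) *
      Real.log ((1 + (1 - √2) * b * n) / (1 + (1 + √2) * b * n))) :=
    neg_nonneg.2 (mul_nonpos_of_nonneg_of_nonpos (by positivity) hlog)
  refine (ha.smul hcoeff).neg.congr fun T _ => ?_
  simp only [Pi.neg_apply, smul_eq_mul, attractionFreeEnergy]
  ring

theorem convexOn_sub_mul_sqrt_sq {p q : ℝ} (hpq : 0 ≤ p * q) :
    ConvexOn ℝ (Ici 0) fun x => (p - q * √x) ^ 2 := by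
  have hsqrt : ConcaveOn ℝ (Ici 0) fun x => 2 * (p * q) * √x :=
    Real.strictConcaveOn_sqrt.concaveOn.smul (mul_nonneg zero_le_two hpq)
  have haffine : ConvexOn ℝ (Ici 0) fun x => q ^ 2 * x + p ^ 2 :=
    ((LinearMap.mulLeft ℝ (q ^ 2)).convexOn (convex_Ici 0)).add_const _
  refine (haffine.sub hsqrt).congr fun x hx => ?_
  simp only [Pi.sub_apply]
  linear_combination -q ^ 2 * Real.sq_sqrt hx

/-- Soave's temperature correction of the energy parameter, `a(T) / a(T_c)`, where `m` is the
acentric-factor coefficient and `Tc` the critical temperature. -/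
noncomputable def soaveAlpha (m Tc T : ℝ) : ℝ :=
  (1 + m * (1 - √(T / Tc))) ^ 2

theorem convexOn_soaveAlpha {m : ℝ} (hm : 0 ≤ m) (Tc : ℝ) :
    ConvexOn ℝ (Ici 0) (soaveAlpha m Tc) := by
  have hpq : 0 ≤ (1 + m) * (m / √Tc) := by positivity
  refine (convexOn_sub_mul_sqrt_sq hpq).congr fun T hT => ?_
  simp only [soaveAlpha, Real.sqrt_div hT]
  ring

/-- The bulk Helmholtz free energy density `f_b` of a cubic equation of state with the Peng–Robinson
volume dependence, for an arbitrary heat capacity at constant pressure `ψ` and an arbitrary energy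
parameter `a`. -/
noncomputable def bulkFreeEnergy (R P₀ T₀ ϑ₀ b : ℝ) (ψ a : ℝ → ℝ) (n T : ℝ) : ℝ :=
  idealFreeEnergy R P₀ T₀ ϑ₀ ψ n T + repulsionFreeEnergy R b n T + attractionFreeEnergy b a n T

theorem bulk_free_energy_concave_in_temperature_general {R P₀ T₀ b n : ℝ} (ϑ₀ : ℝ)
    (hR : 0 < R) (hP₀ : 0 < P₀) (hT₀ : 0 < T₀) (hb : 0 < b) (hn : 0 < n) (hbn : b * n < 1)
    {ψ : ℝ → ℝ} (hψ : ContinuousOn ψ (Ioi 0)) (hψR : ∀ T, 0 < T → R ≤ ψ T)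
    {a : ℝ → ℝ} (ha : ConvexOn ℝ (Ioi 0) a) :
    ConcaveOn ℝ (Ioi 0) (bulkFreeEnergy R P₀ T₀ ϑ₀ b ψ a n) :=
  ((concaveOn_idealFreeEnergy ϑ₀ hR hP₀ hT₀ hn hψ hψR).add
    (concaveOn_repulsionFreeEnergy R b n (convex_Ioi 0))).add
    (concaveOn_attractionFreeEnergy hb.le hn.le hbn.le ha)

theorem integral_cubic (α₀ α₁ α₂ α₃ s t : ℝ) :
    ∫ x in s..t, (α₀ + α₁ * x + α₂ * x ^ 2 + α₃ * x ^ 3) =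
      α₀ * (t - s) + α₁ * (t ^ 2 - s ^ 2) / 2 + α₂ * (t ^ 3 - s ^ 3) / 3
        + α₃ * (t ^ 4 - s ^ 4) / 4 := by
  have hderiv (x : ℝ) : HasDerivAt
      (fun x => α₀ * x + α₁ * x ^ 2 / 2 + α₂ * x ^ 3 / 3 + α₃ * x ^ 4 / 4)
      (α₀ + α₁ * x + α₂ * x ^ 2 + α₃ * x ^ 3) x := by
    refine (((((hasDerivAt_id' x).const_mul α₀).add
      (((hasDerivAt_pow 2 x).const_mul α₁).div_const 2)).add
      (((hasDerivAt_pow 3 x).const_mul α₂).div_const 3)).add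
      (((hasDerivAt_pow 4 x).const_mul α₃).div_const 4)).congr_deriv ?_
    push_cast
    ring
  rw [intervalIntegral.integral_eq_sub_of_hasDerivAt (fun x _ => hderiv x)
    (Continuous.intervalIntegrable (by fun_prop) s t)]
  ring

/-- If the ideal-gas heat capacity satisfies `ψ_p(T) > R` for all `T > 0`, then
the Peng–Robinson bulk Helmholtz free energy density `T ↦ f_b(n,T)` at fixed
molar density `n` (with `0 < bn < 1`) is concave on `(0, ∞)`. -/
theorem bulk_free_energy_concave_in_temperature
    (R Pc Tc P₀ T₀ m b ϑ₀ α₀ α₁ α₂ α₃ n : ℝ)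
    (hR : 0 < R) (hPc : 0 < Pc) (hTc : 0 < Tc) (hP₀ : 0 < P₀) (hT₀ : 0 < T₀)
    (hm : 0 ≤ m) (hb : 0 < b) (hn : 0 < n) (hbn : b * n < 1)
    (ψp : ℝ → ℝ) (hψp : ∀ ξ : ℝ, ψp ξ = α₀ + α₁ * ξ + α₂ * ξ ^ 2 + α₃ * ξ ^ 3)
    (hψpR : ∀ T : ℝ, 0 < T → R < ψp T)
    (a : ℝ → ℝ)
    (ha : ∀ T : ℝ,
      a T = 0.45724 * (R ^ 2 * Tc ^ 2 / Pc) * (1 + m * (1 - Real.sqrt (T / Tc))) ^ 2)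
    (G : ℝ → ℝ)
    (hG : ∀ T : ℝ, 0 < T →
      G T = (n * ϑ₀
          + n * (α₀ * (T - T₀) + α₁ * (T ^ 2 - T₀ ^ 2) / 2
              + α₂ * (T ^ 3 - T₀ ^ 3) / 3 + α₃ * (T ^ 4 - T₀ ^ 4) / 4)
          - n * R * (T - T₀)
          - n * R * T * Real.log (P₀ / (n * R * T))
          - n * T * ∫ ξ in T₀..T, ψp ξ / ξ)
        + (-(n * R * T * Real.log (1 - b * n)))
        + (a T * n / (2 * Real.sqrt 2 * b)) *
            Real.log ((1 + (1 - Real.sqrt 2) * b * n) / (1 + (1 + Real.sqrt 2) * b * n))) :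
    ConcaveOn ℝ (Set.Ioi (0 : ℝ)) G := by
  have hψ : ψp = fun ξ => α₀ + α₁ * ξ + α₂ * ξ ^ 2 + α₃ * ξ ^ 3 := funext hψp
  have hψ_cont : ContinuousOn ψp (Ioi 0) := by rw [hψ]; fun_prop
  have ha_convex : ConvexOn ℝ (Ioi 0) a := by
    rw [funext ha]
    exact ((convexOn_soaveAlpha hm Tc).smul (by positivity)).subset Ioi_subset_Ici_self
      (convex_Ioi 0)
  refine (bulk_free_energy_concave_in_temperature_general ϑ₀ hR hP₀ hT₀ hb hn hbn hψ_cont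
    (fun T hT => (hψpR T hT).le) ha_convex).congr fun T hT => ?_
  rw [hG T hT, ← integral_cubic, ← hψ]
  rfl
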